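/- arXiv:1507.03163 — 2 statements merged into one kernel-verified Lean document; each statement's English description precedes it below -/
import Mathlib

section
/- Let n ≥ 2, and in S_{2n} let ρ be the involution pairing 2k with 2k+1. Then the number of permutations τ ∈ S_{2n} that are products of n disjoint transpositions (i.e. lie in the conjugacy class of ρ) and such that τ·ρ is a product of two disjoint n-cycles equals 2^{n−1}·(n−1)!. -/
/-- The fixed-point-free involution of `Fin (2n)` pairing `2k` with `2k+1`. -/
def rho (n : ℕ) : Equiv.Perm (Fin (2 * n)) :=
  Function.Involutive.toPerm
    (fun x => ⟨if x.val % 2 = 0 then x.val + 1 else x.val - 1, by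
      have := x.isLt; split_ifs with h <;> omega⟩)
    (by
      intro x
      have hx := x.isLt
      apply Fin.ext
      dsimp only
      split_ifs <;> omega)

/-!
If `τ` and `ρ` are fixed-point-free involutions of a set of `2n` points and `τ * ρ` is a product of
two `n`-cycles, then `τ` and `ρ` generate a dihedral group of order `2n` acting simply transitively:
the nontrivial powers of `τ * ρ` have no fixed points, and every reflection is conjugate to `τ` or
to `ρ`. The admissible `τ` thus correspond to the simply transitive actions of the dihedral group in
which a given reflection acts as `ρ`.

Such an action together with a base point is the same as a labelling of the points by the dihedral
group. The labellings for which the given reflection acts as `ρ` form a torsor under the centralizer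
of `ρ`, which has order `2 ^ n * n!`. Dividing by the `2n` choices of base point gives the count.
-/

open Equiv Equiv.Perm Function
open DihedralGroup (r sr r_mul_sr sr_mul_r sr_mul_sr inv_r r_one_zpow)

section CycleType

variable {α : Type*} [Fintype α] [DecidableEq α] {σ : Perm α} {k m : ℕ}

theorem minimalPeriod_eq_card_support_cycleOf {x : α} (hx : σ x ≠ x) :
    minimalPeriod σ x = (σ.cycleOf x).support.card := by
  have hmem : x ∈ (σ.cycleOf x).support := by simpa using hx
  have hdvd (i : ℕ) : minimalPeriod σ x ∣ i ↔ (σ.cycleOf x).support.card ∣ i := by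
    rw [← isPeriodicPt_iff_minimalPeriod_dvd, ← (isCycleOn_support_cycleOf σ x).pow_apply_eq hmem,
      IsPeriodicPt, IsFixedPt, iterate_eq_pow]
  exact Nat.dvd_antisymm ((hdvd _).2 dvd_rfl) ((hdvd _).1 dvd_rfl)

theorem mem_cycleType_iff_exists_minimalPeriod :
    m ∈ σ.cycleType ↔ ∃ x, σ x ≠ x ∧ minimalPeriod σ x = m := by
  rw [cycleType_def, Multiset.mem_map]
  constructor
  · rintro ⟨c, hc : c ∈ σ.cycleFactorsFinset, rfl⟩
    obtain ⟨x, hxc⟩ := (mem_cycleFactorsFinset_iff.1 hc).1.nonempty_support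
    have hx : σ x ≠ x := mem_support.1 (mem_cycleFactorsFinset_support_le hc hxc)
    refine ⟨x, hx, ?_⟩
    rw [minimalPeriod_eq_card_support_cycleOf hx, ← cycle_is_cycleOf hxc hc, comp_apply]
  · rintro ⟨x, hx, rfl⟩
    exact ⟨σ.cycleOf x, cycleOf_mem_cycleFactorsFinset_iff.2 (mem_support.2 hx),
      (minimalPeriod_eq_card_support_cycleOf hx).symm⟩

theorem cycleType_eq_replicate_iff_minimalPeriod (hm : 1 < m) (hα : Fintype.card α = k * m) :
    σ.cycleType = Multiset.replicate k m ↔ ∀ x, minimalPeriod σ x = m := by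
  constructor
  · intro h x
    have hsupp : σ.support = Finset.univ := by
      rw [← Finset.card_eq_iff_eq_univ, ← sum_cycleType, h, hα, Multiset.sum_replicate,
        smul_eq_mul]
    have hx : σ x ≠ x := mem_support.1 (hsupp ▸ Finset.mem_univ x)
    have hmem := mem_cycleType_iff_exists_minimalPeriod.2 ⟨x, hx, rfl⟩
    exact Multiset.eq_of_mem_replicate (h ▸ hmem)
  · intro h
    have hsupp : σ.support = Finset.univ := by
      refine Finset.eq_univ_iff_forall.2 fun x => mem_support.2 fun hx => hm.ne' ?_
      rw [← h x, minimalPeriod_eq_one_iff_isFixedPt.2 hx]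
    have hmem : ∀ a ∈ σ.cycleType, a = m := fun a ha => by
      obtain ⟨x, -, rfl⟩ := mem_cycleType_iff_exists_minimalPeriod.1 ha
      exact h x
    have hsum : σ.cycleType.card * m = k * m := by
      rw [← hα, ← Finset.card_univ, ← hsupp, ← sum_cycleType,
        Multiset.eq_replicate_card.2 hmem, Multiset.sum_replicate, smul_eq_mul,
        Multiset.card_replicate]
    exact Multiset.eq_replicate.2 ⟨Nat.eq_of_mul_eq_mul_right (by lia) hsum, hmem⟩

theorem apply_ne_of_cycleType_eq_replicate (hσ : σ.cycleType = Multiset.replicate k m) (hm : 1 < m)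
    (hα : Fintype.card α = k * m) (x : α) : σ x ≠ x := fun hx => by
  have hperiod := (cycleType_eq_replicate_iff_minimalPeriod hm hα).1 hσ x
  rw [minimalPeriod_eq_one_iff_isFixedPt.2 hx] at hperiod
  exact hm.ne hperiod

theorem pow_eq_one_of_cycleType_eq_replicate (hσ : σ.cycleType = Multiset.replicate k m) :
    σ ^ m = 1 := by
  rw [← orderOf_dvd_iff_pow_eq_one, ← lcm_cycleType, hσ]
  exact Multiset.lcm_dvd.2 fun a ha => (Multiset.eq_of_mem_replicate ha).dvd

theorem card_centralizer_of_cycleType_eq_replicate (hσ : σ.cycleType = Multiset.replicate k m)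
    (hα : Fintype.card α = k * m) :
    Nat.card (Subgroup.centralizer {σ}) = m ^ k * k.factorial := by
  rw [nat_card_centralizer, hσ, hα]
  rcases eq_or_ne k 0 with rfl | hk <;> simp [Multiset.toFinset_replicate, *]

end CycleType

section RegularRep

variable {G α : Type*} [Group G]

/-- A permutation representation is *regular* if it is simply transitive, i.e. all its orbit maps
`G → α` are bijections. Every representation on an empty `α` is regular in this sense. -/
def IsRegularRep (φ : G →* Perm α) : Prop :=
  ∀ x, Bijective fun g => φ g x

/-- The left regular representation of `G`, carried to `α` by a labelling `e` of its points. -/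
def regularRep (e : G ≃ α) : G →* Perm α :=
  e.permCongrHom.toMonoidHom.comp (MulAction.toPermHom G G)

theorem regularRep_apply (e : G ≃ α) (g : G) (x : α) : regularRep e g x = e (g * e.symm x) :=
  rfl

theorem regularRep_trans (e : G ≃ α) (π : Perm α) (g : G) :
    regularRep (e.trans π) g = π * regularRep e g * π⁻¹ :=
  rfl

theorem isRegularRep_regularRep (e : G ≃ α) : IsRegularRep (regularRep e) := fun x =>
  e.bijective.comp (Group.mulRight_bijective (e.symm x))

theorem IsRegularRep.minimalPeriod_apply {φ : G →* Perm α} (hφ : IsRegularRep φ) (g : G) (x : α) :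
    minimalPeriod (φ g) x = orderOf g := by
  refine minimalPeriod_eq_minimalPeriod_iff.2 fun i => ?_
  have hfix : φ (g ^ i) x = x ↔ g ^ i = 1 := by
    simpa using (hφ x).injective.eq_iff (a := g ^ i) (b := 1)
  rw [isPeriodicPt_mul_iff_pow_eq_one, ← hfix, map_pow, IsPeriodicPt, IsFixedPt, iterate_eq_pow]

theorem IsRegularRep.cycleType_apply [Fintype α] [DecidableEq α] {φ : G →* Perm α}
    (hφ : IsRegularRep φ) {g : G} {k m : ℕ} (hg : orderOf g = m) (hm : 1 < m)
    (hα : Fintype.card α = k * m) : (φ g).cycleType = Multiset.replicate k m :=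
  (cycleType_eq_replicate_iff_minimalPeriod hm hα).2 fun x => (hφ.minimalPeriod_apply g x).trans hg

theorem hom_apply_ne_of_isConj {φ : G →* Perm α} {g h : G} (hgh : IsConj g h)
    (hg : ∀ x, φ g x ≠ x) (x : α) : φ h x ≠ x := by
  obtain ⟨c, rfl⟩ := isConj_iff.1 hgh
  exact fun hx => hg ((φ c)⁻¹ x) (by simpa [Equiv.eq_symm_apply] using hx)

theorem isRegularRep_of_forall_apply_ne [Finite α] (hcard : Nat.card G = Nat.card α)
    {φ : G →* Perm α} (hφ : ∀ g ≠ 1, ∀ x, φ g x ≠ x) : IsRegularRep φ := by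
  refine fun x => (Nat.bijective_iff_injective_and_card _).2 ⟨fun g h hgh => ?_, hcard⟩
  have hfix : φ (h⁻¹ * g) x = x := by simpa [Equiv.symm_apply_eq] using hgh
  by_contra hne
  exact hφ (h⁻¹ * g) (by rwa [Ne, inv_mul_eq_one, eq_comm]) x hfix

/-- Labelling `α` by `G` amounts to choosing a regular representation of `G` on `α` and the point
labelled `1`. -/
noncomputable def equivRegularRepProd : (G ≃ α) ≃ {φ : G →* Perm α // IsRegularRep φ} × α where
  toFun e := (⟨regularRep e, isRegularRep_regularRep e⟩, e 1)
  invFun p := Equiv.ofBijective _ (p.1.2 p.2)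
  left_inv e := by ext g; simp [regularRep_apply]
  right_inv := by
    rintro ⟨⟨φ, hφ⟩, x⟩
    refine Prod.ext (Subtype.ext <| MonoidHom.ext fun g => Perm.ext fun y => ?_) (by simp)
    obtain ⟨h, rfl⟩ := (Equiv.ofBijective _ (hφ x)).surjective y
    simp [regularRep_apply]

theorem card_isRegularRep_mul_card (s : G) (ρ : Perm α) :
    Nat.card {φ : G →* Perm α // IsRegularRep φ ∧ φ s = ρ} * Nat.card α =
      Nat.card {e : G ≃ α // regularRep e s = ρ} := by
  rw [← Nat.card_prod]
  refine Nat.card_congr (Equiv.symm ?_)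
  calc {e : G ≃ α // regularRep e s = ρ}
      ≃ {p : {φ : G →* Perm α // IsRegularRep φ} × α // p.1.1 s = ρ} :=
        equivRegularRepProd.subtypeEquiv fun _ => Iff.rfl
    _ ≃ {φ : {φ : G →* Perm α // IsRegularRep φ} // φ.1 s = ρ} × α :=
        prodSubtypeFstEquivSubtypeProd (p := fun φ : {φ // IsRegularRep φ} => φ.1 s = ρ)
    _ ≃ {φ : G →* Perm α // IsRegularRep φ ∧ φ s = ρ} × α :=
        (subtypeSubtypeEquivSubtypeInter IsRegularRep (· s = ρ)).prodCongr (Equiv.refl α)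

theorem card_regularRep_apply_eq (e₀ : G ≃ α) (s : G) :
    Nat.card {e : G ≃ α // regularRep e s = regularRep e₀ s} =
      Nat.card (Subgroup.centralizer {regularRep e₀ s}) := by
  refine Nat.card_congr (((e₀.symm.equivCongr (Equiv.refl α)).subtypeEquiv fun π => ?_).symm)
  change _ ↔ π * regularRep e₀ s * π⁻¹ = regularRep e₀ s
  rw [Subgroup.mem_centralizer_singleton_iff, mul_inv_eq_iff_eq_mul]

section Fintype

variable [Finite G] [Fintype α] [DecidableEq α] {s : G} {ρ : Perm α} {k m : ℕ}

theorem exists_regularRep_apply_eq (hcard : Nat.card G = Nat.card α) (hs : orderOf s = m)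
    (hm : 1 < m) (hα : Fintype.card α = k * m) (hρ : ρ.cycleType = Multiset.replicate k m) :
    ∃ e : G ≃ α, regularRep e s = ρ := by
  obtain ⟨e⟩ := Finite.card_eq.1 hcard
  have he : (regularRep e s).cycleType = ρ.cycleType :=
    ((isRegularRep_regularRep e).cycleType_apply hs hm hα).trans hρ.symm
  obtain ⟨π, hπ⟩ := isConj_iff.1 (isConj_iff_cycleType_eq.2 he)
  exact ⟨e.trans π, (regularRep_trans e π s).trans hπ⟩

theorem card_isRegularRep_mul_card_of_cycleType (hcard : Nat.card G = Nat.card α)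
    (hs : orderOf s = m) (hm : 1 < m) (hα : Fintype.card α = k * m)
    (hρ : ρ.cycleType = Multiset.replicate k m) :
    Nat.card {φ : G →* Perm α // IsRegularRep φ ∧ φ s = ρ} * Nat.card α =
      m ^ k * k.factorial := by
  obtain ⟨e, rfl⟩ := exists_regularRep_apply_eq hcard hs hm hα hρ
  rw [card_isRegularRep_mul_card, card_regularRep_apply_eq,
    card_centralizer_of_cycleType_eq_replicate hρ hα]

end Fintype

end RegularRep

section Dihedral

variable {n : ℕ}

theorem dihedralGroup_hom_ext {M : Type*} [Monoid M] {φ ψ : DihedralGroup n →* M}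
    (h₀ : φ (sr 0) = ψ (sr 0)) (h₁ : φ (sr 1) = ψ (sr 1)) : φ = ψ := by
  have hr (i : ZMod n) : r i ∈ φ.eqLocus ψ := by
    obtain ⟨j, rfl⟩ := ZMod.intCast_surjective i
    have hr₁ : r 1 ∈ φ.eqLocus ψ := by simpa using mul_mem (s := φ.eqLocus ψ) h₀ h₁
    exact r_one_zpow (n := n) j ▸ zpow_mem hr₁ j
  ext (i | i)
  · exact hr i
  · rw [← zero_add i, ← sr_mul_r, map_mul, map_mul, h₀, hr]

theorem exists_dihedralGroup_hom {H : Type*} [Group H] {s t : H} (hs : s ^ 2 = 1) (ht : t ^ 2 = 1)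
    (hst : (s * t) ^ n = 1) : ∃ φ : DihedralGroup n →* H, φ (sr 0) = s ∧ φ (sr 1) = t := by
  have hs_inv : s⁻¹ = s := inv_eq_of_mul_eq_one_left (by rwa [← sq])
  have ht_inv : t⁻¹ = t := inv_eq_of_mul_eq_one_left (by rwa [← sq])
  let powers : ZMod n →+ Additive H := ZMod.lift n
    ⟨zmultiplesHom (Additive H) (.ofMul (s * t)), by simpa [← ofMul_mul, ← ofMul_pow] using hst⟩
  let c (i : ZMod n) : H := (powers i).toMul
  have c_intCast (j : ℤ) : c j = (s * t) ^ j := by simp [c, powers]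
  have c_zero : c 0 = 1 := by simp [c]
  have c_one : c 1 = s * t := by simpa using c_intCast 1
  have c_add (i j : ZMod n) : c (i + j) = c i * c j := by simp [c]
  have conj_c (i : ZMod n) : s * c (-i) = c i * s := by
    obtain ⟨j, rfl⟩ := ZMod.intCast_surjective i
    have hconj : s * (s * t)⁻¹ * s⁻¹ = s * t := by
      rw [mul_inv_rev, hs_inv, ht_inv, mul_assoc s, mul_assoc t, ← sq, hs, mul_one]
    rw [← Int.cast_neg, c_intCast, c_intCast, zpow_neg, ← inv_zpow, ← mul_inv_eq_iff_eq_mul,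
      ← conj_zpow, hconj]
  refine ⟨MonoidHom.mk' (fun | r i => c i | sr i => s * c i) ?_, ?_, ?_⟩
  · rintro (i | i) (j | j)
    · exact c_add i j
    · change s * c (j - i) = c i * (s * c j)
      rw [sub_eq_neg_add, c_add, ← mul_assoc, conj_c, mul_assoc]
    · exact (congrArg (s * ·) (c_add i j)).trans (mul_assoc _ _ _).symm
    · change c (j - i) = s * c i * (s * c j)
      rw [sub_eq_neg_add, c_add, mul_assoc, ← mul_assoc (c i), ← conj_c, ← mul_assoc, ← mul_assoc,
        ← sq, hs, one_mul]
  · exact (congrArg (s * ·) c_zero).trans (mul_one s)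
  · change s * c 1 = t
    rw [c_one, ← mul_assoc, ← sq, hs, one_mul]

theorem isConj_sr_zero_or_sr_one (i : ZMod n) :
    IsConj (sr 0) (sr i) ∨ IsConj (sr 1) (sr i) := by
  have hconj (k j : ZMod n) : IsConj (sr k) (sr (k + 2 * j)) :=
    isConj_iff.2 ⟨r (-j), by
      rw [r_mul_sr, inv_r, neg_neg, sr_mul_r]
      ring_nf⟩
  obtain ⟨j, rfl⟩ := ZMod.intCast_surjective i
  obtain ⟨l, rfl | rfl⟩ := Int.even_or_odd' j
  · exact .inl (by simpa using hconj 0 l)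
  · exact .inr (by simpa [add_comm] using hconj 1 l)

theorem dihedralGroup_hom_apply_ne {α : Type*} {φ : DihedralGroup n →* Perm α}
    (h₀ : ∀ x, φ (sr 0) x ≠ x) (h₁ : ∀ x, φ (sr 1) x ≠ x)
    (hr : ∀ x, minimalPeriod (φ (r 1)) x = n) : ∀ g ≠ 1, ∀ x, φ g x ≠ x := by
  rintro (i | i) hg x
  · obtain ⟨j, rfl⟩ := ZMod.intCast_surjective i
    contrapose! hg
    rw [← r_one_zpow, map_zpow, ← Perm.smul_def, MulAction.zpow_smul_eq_iff_minimalPeriod_dvd] at hg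
    have hdvd : (n : ℤ) ∣ j := hr x ▸ hg
    rw [(ZMod.intCast_zmod_eq_zero_iff_dvd j n).2 hdvd, DihedralGroup.r_zero]
  · rcases isConj_sr_zero_or_sr_one i with hconj | hconj
    · exact hom_apply_ne_of_isConj hconj h₀ x
    · exact hom_apply_ne_of_isConj hconj h₁ x

variable {α : Type*} [Fintype α] [DecidableEq α]

theorem isRegularRep_dihedralGroup_iff (hn : 2 ≤ n) (hα : Fintype.card α = 2 * n)
    {φ : DihedralGroup n →* Perm α} :
    IsRegularRep φ ↔ (φ (sr 0)).cycleType = Multiset.replicate n 2 ∧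
      (φ (sr 1)).cycleType = Multiset.replicate n 2 ∧ (φ (r 1)).cycleType = {n, n} := by
  have hα' : Fintype.card α = n * 2 := hα.trans (mul_comm 2 n)
  constructor
  · intro hφ
    exact ⟨hφ.cycleType_apply (DihedralGroup.orderOf_sr 0) one_lt_two hα',
      hφ.cycleType_apply (DihedralGroup.orderOf_sr 1) one_lt_two hα',
      hφ.cycleType_apply DihedralGroup.orderOf_r_one hn hα⟩
  · rintro ⟨h₀, h₁, hr⟩
    have hcard : Nat.card (DihedralGroup n) = Nat.card α := by
      rw [DihedralGroup.nat_card, Nat.card_eq_fintype_card, hα]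
    exact isRegularRep_of_forall_apply_ne hcard <| dihedralGroup_hom_apply_ne
      (apply_ne_of_cycleType_eq_replicate h₀ one_lt_two hα')
      (apply_ne_of_cycleType_eq_replicate h₁ one_lt_two hα')
      ((cycleType_eq_replicate_iff_minimalPeriod hn hα).1 hr)

theorem card_cycleType_eq_card_isRegularRep (hn : 2 ≤ n) (hα : Fintype.card α = 2 * n) {ρ : Perm α}
    (hρ : ρ.cycleType = Multiset.replicate n 2) :
    Nat.card {τ : Perm α | τ.cycleType = Multiset.replicate n 2 ∧ (τ * ρ).cycleType = {n, n}} =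
      Nat.card {φ : DihedralGroup n →* Perm α // IsRegularRep φ ∧ φ (sr 1) = ρ} := by
  have map_r_one (φ : DihedralGroup n →* Perm α) : φ (r 1) = φ (sr 0) * φ (sr 1) := by
    rw [← map_mul, sr_mul_sr, sub_zero]
  symm
  refine Nat.card_eq_of_bijective (fun φ => ⟨φ.1 (sr 0), ?_⟩) ⟨?_, ?_⟩
  · obtain ⟨φ, hφ, rfl⟩ := φ
    obtain ⟨h₀, -, hr⟩ := (isRegularRep_dihedralGroup_iff hn hα).1 hφ
    exact ⟨h₀, map_r_one φ ▸ hr⟩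
  · rintro ⟨φ, _, hφ⟩ ⟨ψ, _, hψ⟩ h
    exact Subtype.ext (dihedralGroup_hom_ext (congrArg Subtype.val h) (hφ.trans hψ.symm))
  · rintro ⟨τ, hτ, hτρ⟩
    obtain ⟨φ, rfl, rfl⟩ := exists_dihedralGroup_hom
      (pow_eq_one_of_cycleType_eq_replicate hτ) (pow_eq_one_of_cycleType_eq_replicate hρ)
      (pow_eq_one_of_cycleType_eq_replicate (k := 2) hτρ)
    have hφ := (isRegularRep_dihedralGroup_iff hn hα).2 ⟨hτ, hρ, map_r_one φ ▸ hτρ⟩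
    exact ⟨⟨φ, hφ, rfl⟩, rfl⟩

theorem card_class_prod_two_ncycles_general (hn : 2 ≤ n) (hα : Fintype.card α = 2 * n) {ρ : Perm α}
    (hρ : ρ.cycleType = Multiset.replicate n 2) :
    Nat.card {τ : Perm α | τ.cycleType = Multiset.replicate n 2 ∧ (τ * ρ).cycleType = {n, n}} =
      2 ^ (n - 1) * (n - 1).factorial := by
  have : NeZero n := ⟨by lia⟩
  have hαNat : Nat.card α = 2 * n := by rw [Nat.card_eq_fintype_card, hα]
  have hcount := card_isRegularRep_mul_card_of_cycleType (DihedralGroup.nat_card.trans hαNat.symm)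
    (DihedralGroup.orderOf_sr 1) one_lt_two (hα.trans (mul_comm 2 n)) hρ
  rw [← card_cycleType_eq_card_isRegularRep hn hα hρ, hαNat] at hcount
  refine Nat.eq_of_mul_eq_mul_right (show 0 < 2 * n by lia) (hcount.trans ?_)
  obtain ⟨m, rfl⟩ : ∃ m, n = m + 1 := ⟨n - 1, by lia⟩
  rw [Nat.factorial_succ, Nat.add_sub_cancel]
  ring

end Dihedral

theorem cycleType_rho (n : ℕ) : (rho n).cycleType = Multiset.replicate n 2 := by
  refine (cycleType_eq_replicate_iff_minimalPeriod one_lt_two (by simp [mul_comm])).2 fun x =>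
    minimalPeriod_eq_prime (Involutive.toPerm_involutive _ x) fun hx => ?_
  have hval : (if x.val % 2 = 0 then x.val + 1 else x.val - 1) = x.val := congrArg Fin.val hx
  lia

/-- The number of permutations τ of `Fin (2n)` that are products of n disjoint
transpositions and such that τ·ρ is a product of two disjoint n-cycles equals
`2^(n-1)·(n-1)!`. -/
theorem card_class_prod_two_ncycles (n : ℕ) (hn : 2 ≤ n) :
    Nat.card {τ : Equiv.Perm (Fin (2 * n)) |
        τ.cycleType = Multiset.replicate n 2 ∧ (τ * rho n).cycleType = {n, n}}
      = 2 ^ (n - 1) * (n - 1).factorial :=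
  card_class_prod_two_ncycles_general hn (Fintype.card_fin _) (cycleType_rho n)
end

section
/- (Swap is never a symmetry) Let n ≥ 1, and in S_{2n} let ρ be the involution pairing 2k with 2k+1, C_ρ its centralizer, and β the 2n-cycle x ↦ x+1 (mod 2n). Then for every σ ∈ β·C_ρ and every integer p, one has β^{2p}·σ·β^{−2p} ≠ β⁻¹·ρ·σ⁻¹·β; in other words, no element of the coset U = β·C_ρ is conjugate by a power of β² to its swap image σ_s = β⁻¹·ρ·σ⁻¹·β. -/
/-!
Cancelling the cyclic shift `β` from the equation `β^(2p) σ β^(-2p) = β⁻¹ ρ σ⁻¹ β` with `σ = β ξ`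
gives `ρ = β² · (β^(2p) ξ β^(-2p)) · ξ`, so any `±1`-valued character of a group containing `ρ`,
`β²` and `ξ` takes the same value on `ρ` and on `β²`. All three permute the pairs `{2k, 2k+1}`, so
there are two such characters: the sign on the `2n` points, which is `(-1)^n` at `ρ` and `1` at
`β²`, and the sign of the induced permutation of the `n` pairs, which is `1` at `ρ` and `(-1)^(n-1)`
at `β²`, which rotates the pairs cyclically. Hence `n` is both even and odd.
-/

section Character

variable {G : Type*} [Group G]

theorem eq_sq_mul_conj_mul_of_conj_eq_swap {b r x : G} {p : ℤ}
    (h : b ^ (2 * p) * (b * x) * (b ^ (2 * p))⁻¹ = b⁻¹ * r * (b * x)⁻¹ * b) :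
    r = b ^ 2 * ((b ^ 2) ^ p * x * ((b ^ 2) ^ p)⁻¹) * x := by
  calc r = b * (b⁻¹ * r * (b * x)⁻¹ * b) * x := by group
    _ = b * (b ^ (2 * p) * (b * x) * (b ^ (2 * p))⁻¹) * x := by rw [h]
    _ = b ^ 2 * ((b ^ 2) ^ p * x * ((b ^ 2) ^ p)⁻¹) * x := by group

theorem map_eq_map_of_conj_eq_swap {K : Subgroup G} {b : G} {r c x : K} {p : ℤ}
    (hc : (c : G) = b ^ 2)
    (h : b ^ (2 * p) * (b * x) * (b ^ (2 * p))⁻¹ = b⁻¹ * r * (b * x)⁻¹ * b) (χ : K →* ℤˣ) :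
    χ r = χ c := by
  have hr : r = c * (c ^ p * x * (c ^ p)⁻¹) * x := by
    ext
    simpa [hc] using eq_sq_mul_conj_mul_of_conj_eq_swap h
  calc χ r = χ c * (χ c ^ p * χ x * (χ c ^ p)⁻¹) * χ x := by
        rw [hr]; simp only [map_mul, map_inv, map_zpow]
    _ = χ c := by
        rw [mul_inv_cancel_comm, mul_assoc, Int.units_mul_self, mul_one]

end Character

section FiberPerm

open Equiv Function

variable {α β : Type*} {q : α → β}

/-- The subgroup of permutations of `α` that permute the fibers of `q : α → β` among themselves. -/
def fiberSubgroup (q : α → β) : Subgroup (Perm α) where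
  carrier := {g | ∀ x y, q (g x) = q (g y) ↔ q x = q y}
  one_mem' _ _ := Iff.rfl
  mul_mem' hg hh x y := (hg _ _).trans (hh x y)
  inv_mem' {g} hg x y := by simpa using (hg (g⁻¹ x) (g⁻¹ y)).symm

theorem mem_fiberSubgroup_of_semiconj {g : Perm α} {g' : Perm β} (h : Semiconj q g g') :
    g ∈ fiberSubgroup q := fun x y => by
  rw [h x, h y, g'.apply_eq_iff_eq]

/-- The permutation of `β` induced by a permutation of `α` that permutes the fibers of a surjection
`q : α → β`, where `β` is identified with the set of fibers of `q`. -/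
noncomputable def fiberPerm (hq : Surjective q) (g : fiberSubgroup q) : Perm β :=
  let e := Setoid.quotientKerEquivOfSurjective q hq
  (e.symm.trans (Quotient.congr g.1 fun x y => (g.2 x y).symm)).trans e

theorem semiconj_fiberPerm (hq : Surjective q) (g : fiberSubgroup q) :
    Semiconj q g.1 (fiberPerm hq g) := fun x => by
  have hx : (Setoid.quotientKerEquivOfSurjective q hq).symm (q x) = Quotient.mk _ x := by
    rw [Equiv.symm_apply_eq]; rfl
  simp only [fiberPerm, Equiv.trans_apply, hx]
  rfl

theorem fiberPerm_eq_of_semiconj (hq : Surjective q) {g : fiberSubgroup q} {g' : Perm β}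
    (h : Semiconj q g.1 g') : fiberPerm hq g = g' := by
  ext1 y
  obtain ⟨x, rfl⟩ := hq y
  rw [← semiconj_fiberPerm hq g x, h x]

/-- `fiberPerm` as a group homomorphism. -/
noncomputable def fiberPermHom (hq : Surjective q) : fiberSubgroup q →* Perm β :=
  MonoidHom.mk' (fiberPerm hq) fun g h => fiberPerm_eq_of_semiconj hq <|
    (semiconj_fiberPerm hq g).comp_right (semiconj_fiberPerm hq h)

theorem fiberPermHom_eq_of_semiconj (hq : Surjective q) {g : fiberSubgroup q} {g' : Perm β}
    (h : Semiconj q g.1 g') : fiberPermHom hq g = g' :=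
  fiberPerm_eq_of_semiconj hq h

end FiberPerm

section Pairs

open Equiv Function

variable {n : ℕ}

/-- The index `k` of the pair `{2k, 2k+1}` containing a point of `Fin (2 * n)`. -/
def pairIndex (x : Fin (2 * n)) : Fin n := ⟨x / 2, by omega⟩

theorem pairIndex_surjective : Surjective (pairIndex (n := n)) := fun k =>
  ⟨⟨2 * k, by omega⟩, Fin.ext (by simp [pairIndex])⟩

theorem val_rho (x : Fin (2 * n)) :
    (rho n x : ℕ) = if (x : ℕ) % 2 = 0 then (x : ℕ) + 1 else x - 1 := rfl

theorem pairIndex_eq_pairIndex_iff {x y : Fin (2 * n)} :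
    pairIndex x = pairIndex y ↔ y = x ∨ y = rho n x := by
  simp only [pairIndex, Fin.ext_iff, val_rho]
  split_ifs <;> omega

theorem semiconj_pairIndex_rho : Semiconj pairIndex (rho n) (1 : Perm (Fin n)) := fun _ =>
  (pairIndex_eq_pairIndex_iff.2 (.inr rfl)).symm

theorem centralizer_rho_le_fiberSubgroup :
    Subgroup.centralizer {rho n} ≤ fiberSubgroup pairIndex := fun g hg x y => by
  have hcomm : rho n (g x) = g (rho n x) :=
    Perm.congr_fun (Subgroup.mem_centralizer_singleton_iff.1 hg).symm x
  simp only [pairIndex_eq_pairIndex_iff, hcomm, g.apply_eq_iff_eq]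

theorem rho_apply_ne (x : Fin (2 * n)) : rho n x ≠ x := by
  rw [Ne, Fin.ext_iff, val_rho]
  split_ifs <;> omega

theorem sign_rho (n : ℕ) : Perm.sign (rho n) = (-1) ^ n := by
  have hsq : rho n ^ 2 = 1 := by
    ext1 x
    exact (Involutive.toPerm_involutive _) x
  have : IsEmpty (fixedPoints (rho n)) := ⟨fun x => rho_apply_ne x.1 x.2⟩
  rw [Perm.sign_of_pow_two_eq_one hsq, Fintype.card_eq_zero (α := fixedPoints _), Fintype.card_fin,
    Nat.sub_zero, Nat.mul_div_cancel_left n two_pos]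

theorem val_finRotate (x : Fin n) : (finRotate n x : ℕ) = (x + 1) % n := by
  have : NeZero n := ⟨x.pos.ne'⟩
  rw [finRotate_apply, Fin.val_add, Fin.val_one', Nat.add_mod_mod]

theorem semiconj_pairIndex_finRotate_sq :
    Semiconj pairIndex (finRotate (2 * n) ^ 2 : Perm _) (finRotate n) := fun x => Fin.ext <| by
  calc (finRotate (2 * n) (finRotate (2 * n) x) : ℕ) / 2
      = (x + 2) % (2 * n) / 2 := by rw [val_finRotate, val_finRotate, Nat.mod_add_mod]
    _ = (x / 2 + 1) % n := by rw [Nat.mod_mul_right_div_self, Nat.add_div_right _ two_pos]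
    _ = finRotate n (pairIndex x) := (val_finRotate (pairIndex x)).symm

end Pairs

/-- No element σ of the coset U = β·C_ρ is conjugate by a power of β² to its swap
image σ_s = β⁻¹·ρ·σ⁻¹·β. -/
theorem swap_never_symmetry (n : ℕ) (hn : 1 ≤ n) (σ : Equiv.Perm (Fin (2 * n)))
    (hσ : ∃ ξ ∈ Subgroup.centralizer {rho n}, σ = finRotate (2 * n) * ξ) (p : ℤ) :
    finRotate (2 * n) ^ (2 * p) * σ * (finRotate (2 * n) ^ (2 * p))⁻¹
      ≠ (finRotate (2 * n))⁻¹ * rho n * σ⁻¹ * finRotate (2 * n) := by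
  intro hswap
  obtain ⟨ξ, hξ, rfl⟩ := hσ
  let r : fiberSubgroup pairIndex := ⟨rho n, mem_fiberSubgroup_of_semiconj semiconj_pairIndex_rho⟩
  let c : fiberSubgroup pairIndex :=
    ⟨finRotate (2 * n) ^ 2, mem_fiberSubgroup_of_semiconj semiconj_pairIndex_finRotate_sq⟩
  let x : fiberSubgroup pairIndex := ⟨ξ, centralizer_rho_le_fiberSubgroup hξ⟩
  have map_r_eq_map_c (χ : fiberSubgroup pairIndex →* ℤˣ) : χ r = χ c :=
    map_eq_map_of_conj_eq_swap (x := x) rfl hswap χ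
  have sign_points : (-1) ^ n = (1 : ℤˣ) := by
    have h := map_r_eq_map_c (Equiv.Perm.sign.comp (Subgroup.subtype _))
    rwa [MonoidHom.comp_apply, MonoidHom.comp_apply, Subgroup.subtype_apply,
      Subgroup.subtype_apply, sign_rho, map_pow, Int.units_sq] at h
  have sign_pairs : 1 = Equiv.Perm.sign (finRotate n) := by
    have h := map_r_eq_map_c (Equiv.Perm.sign.comp (fiberPermHom pairIndex_surjective))
    rwa [MonoidHom.comp_apply, MonoidHom.comp_apply,
      fiberPermHom_eq_of_semiconj _ semiconj_pairIndex_rho, map_one,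
      fiberPermHom_eq_of_semiconj _ semiconj_pairIndex_finRotate_sq] at h
  obtain ⟨m, rfl⟩ := Nat.exists_eq_add_of_le' hn
  rw [sign_finRotate, Nat.add_sub_cancel] at sign_pairs
  rw [pow_succ, ← sign_pairs] at sign_points
  exact absurd sign_points (by decide)
end
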